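/- Fix a rectangle A = ∏_j (a_j,b_j] in ℝ^d, an integer v ≥ 1, positive definite Σ with unit diagonal and smallest eigenvalue σ_*², φ > 0, ε ∈ (0,1], and constants κ > η > 0. Then for all w outside A^{2εκ+1/φ} \ A^{−2εκ}, Σ_{j_1,…,j_v=1}^d sup_{‖y‖_∞ ≤ εσ_*η} |∂_{j_1…j_v} ρ^{A,φ,ε,Σ}(w + y)| ≤ C d^v (εσ_*)^{−v} e^{−(κ−η)²/4}, where C depends only on v. -/

import Mathlib

open MeasureTheory ProbabilityTheory

/-- The piecewise-linear smoothing function g^φ. -/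
noncomputable def gphi (φ t : ℝ) : ℝ :=
  if t ≤ 0 then 1 else if t < 1 / φ then 1 - φ * t else 0

/-- The φ-Lipschitz smoothed indicator of the rectangle ∏ (a_j, b_j]. -/
noncomputable def mrect (d : ℕ) (a b : Fin d → ℝ) (φ : ℝ) (w : Fin d → ℝ) : ℝ :=
  gphi φ (⨆ j, max (w j - b j) (a j - w j))

/-- ρ^{A,φ,ε,Σ}(w) = E[m^{A,φ}(w + εZ)], Z ∼ N(0,Σ) with law γ. -/
noncomputable def rhoFn (d : ℕ) (a b : Fin d → ℝ) (φ ε : ℝ)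
    (γ : Measure (Fin d → ℝ)) (w : Fin d → ℝ) : ℝ :=
  ∫ z, mrect d a b φ (w + ε • z) ∂γ

/-!
Since `S - σ² • 1` is positive semidefinite, `N(0, S)` is the convolution of `N(0, S - σ² • 1)`
with an isotropic Gaussian of variance `σ²`. By the layer-cake formula the smoothed indicator of
the rectangle is an average over `t ∈ [0, 1]` of the indicators of the closed boxes
`∏ j, [a j - t / φ, b j + t / φ]`. Hence `ρ` is a mixture of products of one-dimensional indicators
of intervals smoothed at scale `εσ`, and its partial derivatives are the corresponding mixtures of
products. In such a product each factor of order `m` is at most `(K / (εσ))ᵐ`, so the Gaussian decay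
is needed in one coordinate only: outside the enlarged box a coordinate violating its constraint,
where already the smoothed indicator is small, and inside the shrunken box a coordinate that is
differentiated, since there it is only the derivatives that are small. In that coordinate a Chernoff
bound has an exponent linear in the `N(0, S - σ² • 1)` part, over which it is then averaged.
-/

section PartialDerivatives

open scoped ContDiff

variable {ι : Type*} [Fintype ι]

lemma norm_sum_smul_proj_le (c : ι → ℝ) {B : ℝ} (hc : ∀ k, |c k| ≤ B) :
    ‖∑ k, c k • (ContinuousLinearMap.proj k : (ι → ℝ) →L[ℝ] ℝ)‖ ≤ Fintype.card ι * B := by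
  have hproj (k : ι) : ‖(ContinuousLinearMap.proj k : (ι → ℝ) →L[ℝ] ℝ)‖ ≤ 1 :=
    ContinuousLinearMap.opNorm_le_bound _ zero_le_one fun x ↦ by
      simpa using norm_le_pi_norm x k
  have hterm (k : ι) (_ : k ∈ Finset.univ) :
      ‖c k • (ContinuousLinearMap.proj k : (ι → ℝ) →L[ℝ] ℝ)‖ ≤ B := by
    rw [norm_smul]
    exact (mul_le_of_le_one_right (norm_nonneg _) (hproj k)).trans (hc k)
  simpa using norm_sum_le_of_le _ hterm

variable [DecidableEq ι]

/-- `f α` is the partial derivative `∂^α (f 0)` for every multi-index `α`: each `f α` has gradient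
`(f (α + e_k))_k`. Recognising such a family computes all mixed partial derivatives of `f 0`. -/
def IsPartialDerivFamily (f : (ι → ℕ) → (ι → ℝ) → ℝ) : Prop :=
  ∀ α x, HasFDerivAt (f α)
    (∑ k, f (α + Pi.single k 1) x • (ContinuousLinearMap.proj k : (ι → ℝ) →L[ℝ] ℝ)) x

namespace IsPartialDerivFamily

variable {f : (ι → ℕ) → (ι → ℝ) → ℝ}

lemma contDiff (hf : IsPartialDerivFamily f) (n : ℕ) (α : ι → ℕ) : ContDiff ℝ n (f α) := by
  induction n generalizing α with
  | zero => exact contDiff_zero.2 (continuous_iff_continuousAt.2 fun x ↦ (hf α x).continuousAt)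
  | succ n ih =>
    push_cast
    refine contDiff_succ_iff_fderiv.2 ⟨fun x ↦ (hf α x).differentiableAt, by simp, ?_⟩
    rw [show fderiv ℝ (f α) = _ from funext fun x ↦ (hf α x).fderiv]
    exact ContDiff.sum fun k _ ↦ (ih _).smul contDiff_const

lemma iteratedFDeriv_apply_single (hf : IsPartialDerivFamily f) {n : ℕ} (J : Fin n → ι)
    (x : ι → ℝ) :
    iteratedFDeriv ℝ n (f 0) x (fun i ↦ Pi.single (J i) 1) = f (∑ i, Pi.single (J i) 1) x := by
  induction n generalizing x with
  | zero => simp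
  | succ n ih =>
    let eval := ContinuousMultilinearMap.apply ℝ (fun _ : Fin n ↦ ι → ℝ) ℝ
      fun i ↦ Pi.single (J i.succ) 1
    have hdiff : DifferentiableAt ℝ (iteratedFDeriv ℝ n (f 0)) x :=
      (hf.contDiff (n + 1) 0).differentiable_iteratedFDeriv (by exact_mod_cast n.lt_succ_self) x
    have hderiv : HasFDerivAt (f (∑ i : Fin n, Pi.single (J i.succ) 1))
        (eval.comp (fderiv ℝ (iteratedFDeriv ℝ n (f 0)) x)) x :=
      (eval.hasFDerivAt.comp x hdiff.hasFDerivAt).congr_of_eventuallyEq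
        (.of_forall fun y ↦ (ih (fun i ↦ J i.succ) y).symm)
    have heq := DFunLike.congr_fun (hderiv.unique (hf _ x)) (Pi.single (J 0) 1)
    rw [iteratedFDeriv_succ_apply_left]
    refine heq.trans ?_
    rw [Fin.sum_univ_succ, add_comm (Pi.single (J 0) 1)]
    simp [Pi.single_apply]

lemma prod_iteratedDeriv {g : ι → ℝ → ℝ} (hg : ∀ j, ContDiff ℝ ∞ (g j)) :
    IsPartialDerivFamily fun α x ↦ ∏ j, iteratedDeriv (α j) (g j) (x j) := by
  intro α x
  have hfactor (j : ι) : HasFDerivAt (fun x : ι → ℝ ↦ iteratedDeriv (α j) (g j) (x j))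
      (iteratedDeriv (α j + 1) (g j) (x j) •
        (ContinuousLinearMap.proj j : (ι → ℝ) →L[ℝ] ℝ)) x := by
    have hdiff : DifferentiableAt ℝ (iteratedDeriv (α j) (g j)) (x j) :=
      (hg j).differentiable_iteratedDeriv (α j) (by exact_mod_cast WithTop.coe_lt_top _) _
    rw [iteratedDeriv_succ]
    exact hdiff.hasDerivAt.comp_hasFDerivAt x
      (ContinuousLinearMap.proj j : (ι → ℝ) →L[ℝ] ℝ).hasFDerivAt
  refine (HasFDerivAt.finsetProd fun j _ ↦ hfactor j).congr_fderiv
    (Finset.sum_congr rfl fun k _ ↦ ?_)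
  beta_reduce
  rw [smul_smul, ← Finset.prod_erase_mul Finset.univ _ (Finset.mem_univ k)]
  congr 2
  · refine Finset.prod_congr rfl fun j hj ↦ ?_
    simp [Finset.ne_of_mem_erase hj]
  · simp

lemma integral {Ω : Type*} [MeasurableSpace Ω] {μ : Measure Ω} [IsFiniteMeasure μ]
    {f : Ω → (ι → ℕ) → (ι → ℝ) → ℝ} {B : (ι → ℕ) → ℝ} (hf : ∀ p, IsPartialDerivFamily (f p))
    (hmeas : ∀ α x, Measurable fun p ↦ f p α x) (hB : ∀ p α x, |f p α x| ≤ B α) :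
    IsPartialDerivFamily fun α x ↦ ∫ p, f p α x ∂μ := by
  intro α x
  have hinteg (β : ι → ℕ) : Integrable (fun p ↦ f p β x) μ :=
    .of_bound (hmeas β x).aestronglyMeasurable (B β) (ae_of_all _ fun p ↦ hB p β x)
  have hgrad (k : ι) (_ : k ∈ Finset.univ) : Integrable (fun p ↦ f p (α + Pi.single k 1) x •
      (ContinuousLinearMap.proj k : (ι → ℝ) →L[ℝ] ℝ)) μ := (hinteg _).smul_const _
  have hcomm : ∫ p, ∑ k, f p (α + Pi.single k 1) x •
        (ContinuousLinearMap.proj k : (ι → ℝ) →L[ℝ] ℝ) ∂μ =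
      ∑ k, (∫ p, f p (α + Pi.single k 1) x ∂μ) •
        (ContinuousLinearMap.proj k : (ι → ℝ) →L[ℝ] ℝ) := by
    rw [integral_finsetSum _ hgrad]
    exact Finset.sum_congr rfl fun k _ ↦ integral_smul_const _ _
  have hbound (p : Ω) (y : ι → ℝ) : ‖∑ k, f p (α + Pi.single k 1) y •
      (ContinuousLinearMap.proj k : (ι → ℝ) →L[ℝ] ℝ)‖ ≤
        Fintype.card ι * ∑ k, B (α + Pi.single k 1) :=
    norm_sum_smul_proj_le _ fun k ↦ (hB p _ y).trans <|
      Finset.single_le_sum (f := fun k ↦ B (α + Pi.single k 1))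
        (fun j _ ↦ (abs_nonneg _).trans (hB p _ y)) (Finset.mem_univ k)
  have hgradmeas : AEStronglyMeasurable (fun p ↦ ∑ k, f p (α + Pi.single k 1) x •
      (ContinuousLinearMap.proj k : (ι → ℝ) →L[ℝ] ℝ)) μ :=
    Finset.aestronglyMeasurable_fun_sum _ fun k hk ↦ (hgrad k hk).aestronglyMeasurable
  beta_reduce
  rw [← hcomm]
  exact hasFDerivAt_integral_of_dominated_of_fderiv_le Filter.univ_mem
    (.of_forall fun y ↦ (hmeas α y).aestronglyMeasurable) (hinteg α) hgradmeas
    (ae_of_all _ fun p y _ ↦ hbound p y) (integrable_const _) (ae_of_all _ fun p y _ ↦ hf p α y)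

end IsPartialDerivFamily

end PartialDerivatives

section GaussianCDF

open scoped ContDiff

lemma cdf_gaussianReal_eq_integral (μ : ℝ) {v : NNReal} (hv : v ≠ 0) (x : ℝ) :
    cdf (gaussianReal μ v) x = ∫ t in Set.Iic x, gaussianPDFReal μ v t := by
  rw [cdf_eq_real, measureReal_def, gaussianReal_apply_eq_integral μ hv, ENNReal.toReal_ofReal]
  exact integral_nonneg fun t ↦ gaussianPDFReal_nonneg μ v t

lemma contDiff_gaussianPDFReal (μ : ℝ) (v : NNReal) : ContDiff ℝ ∞ (gaussianPDFReal μ v) := by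
  unfold gaussianPDFReal
  fun_prop

lemma hasDerivAt_cdf_gaussianReal (μ : ℝ) {v : NNReal} (hv : v ≠ 0) (x : ℝ) :
    HasDerivAt (cdf (gaussianReal μ v)) (gaussianPDFReal μ v x) x := by
  have hc : Continuous (gaussianPDFReal μ v) := (contDiff_gaussianPDFReal μ v).continuous
  have hi : Integrable (gaussianPDFReal μ v) := integrable_gaussianPDFReal μ v
  have hcdf : ⇑(cdf (gaussianReal μ v)) =
      fun y ↦ cdf (gaussianReal μ v) x + ∫ t in x..y, gaussianPDFReal μ v t := by
    funext y
    rw [← intervalIntegral.integral_Iic_sub_Iic hi.integrableOn hi.integrableOn,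
      ← cdf_gaussianReal_eq_integral μ hv, ← cdf_gaussianReal_eq_integral μ hv,
      add_sub_cancel]
  rw [hcdf]
  exact (intervalIntegral.integral_hasDerivAt_right (hc.intervalIntegrable x x)
    hc.stronglyMeasurable.stronglyMeasurableAtFilter hc.continuousAt).const_add _

lemma deriv_cdf_gaussianReal (μ : ℝ) {v : NNReal} (hv : v ≠ 0) :
    deriv (cdf (gaussianReal μ v)) = gaussianPDFReal μ v :=
  funext fun x ↦ (hasDerivAt_cdf_gaussianReal μ hv x).deriv

lemma contDiff_cdf_gaussianReal (μ : ℝ) {v : NNReal} (hv : v ≠ 0) :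
    ContDiff ℝ ∞ (cdf (gaussianReal μ v)) := by
  refine contDiff_infty_iff_deriv.2
    ⟨fun x ↦ (hasDerivAt_cdf_gaussianReal μ hv x).differentiableAt, ?_⟩
  rw [deriv_cdf_gaussianReal μ hv]
  exact contDiff_gaussianPDFReal μ v

lemma measureReal_Icc_eq_cdf_sub_cdf (μ : Measure ℝ) [IsProbabilityMeasure μ] [NullSingletonClass μ]
    {x y : ℝ} (hxy : x ≤ y) : μ.real (Set.Icc x y) = cdf μ y - cdf μ x := by
  rw [measureReal_def, ← measure_congr Ioc_ae_eq_Icc]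
  nth_rw 1 [← measure_cdf μ]
  rw [StieltjesFunction.measure_Ioc,
    ENNReal.toReal_ofReal (sub_nonneg.2 (monotone_cdf μ hxy))]

local notation "Φ" => cdf (gaussianReal 0 1)

lemma iteratedDeriv_succ_cdf_gaussianReal (m : ℕ) (x : ℝ) :
    iteratedDeriv (m + 1) Φ x = (√(2 * Real.pi))⁻¹ *
      ((-1) ^ m * Polynomial.aeval x (Polynomial.hermite m) * Real.exp (-(x ^ 2 / 2))) := by
  have hpdf : gaussianPDFReal 0 1 =
      fun x ↦ (√(2 * Real.pi))⁻¹ * Real.exp (-(x ^ 2 / 2)) := by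
    funext x
    simp [gaussianPDFReal, neg_div]
  rw [iteratedDeriv_succ', deriv_cdf_gaussianReal 0 one_ne_zero, hpdf,
    iteratedDeriv_const_mul_field, iteratedDeriv_eq_iterate,
    Polynomial.deriv_gaussian_eq_hermite_mul_gaussian]

lemma exists_abs_aeval_le_mul_exp (P : Polynomial ℤ) :
    ∃ C, ∀ x : ℝ, |Polynomial.aeval x P| ≤ C * Real.exp (x ^ 2 / 4) := by
  induction P using Polynomial.induction_on' with
  | add P Q hP hQ =>
    obtain ⟨C, hC⟩ := hP
    obtain ⟨D, hD⟩ := hQ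
    refine ⟨C + D, fun x ↦ ?_⟩
    rw [map_add, add_mul]
    exact (abs_add_le _ _).trans (add_le_add (hC x) (hD x))
  | monomial n a =>
    refine ⟨|(a : ℝ)| * (n.factorial * Real.exp 1), fun x ↦ ?_⟩
    have hpow : |x| ^ n ≤ n.factorial * Real.exp |x| := by
      have h := Real.pow_div_factorial_le_exp |x| (abs_nonneg x) n
      rwa [div_le_iff₀' (by positivity)] at h
    have hexp : Real.exp |x| ≤ Real.exp 1 * Real.exp (x ^ 2 / 4) := by
      rw [← Real.exp_add, Real.exp_le_exp, ← sq_abs x]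
      linarith [sq_nonneg (|x| / 2 - 1)]
    calc |Polynomial.aeval x (Polynomial.monomial n a)| = |(a : ℝ)| * |x| ^ n := by
          simp [Polynomial.aeval_monomial, abs_mul]
      _ ≤ |(a : ℝ)| * (n.factorial * (Real.exp 1 * Real.exp (x ^ 2 / 4))) := by
          grw [hpow, hexp]
      _ = _ := by ring

lemma bddAbove_abs_iteratedDeriv_cdf_mul_exp (m : ℕ) :
    BddAbove (Set.range fun x ↦ |iteratedDeriv (m + 1) Φ x| * Real.exp (x ^ 2 / 4)) := by
  obtain ⟨C, hC⟩ := exists_abs_aeval_le_mul_exp (Polynomial.hermite m)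
  refine ⟨(√(2 * Real.pi))⁻¹ * C, Set.forall_mem_range.2 fun x ↦ ?_⟩
  have hsplit : Real.exp (-(x ^ 2 / 2)) * Real.exp (x ^ 2 / 4) = (Real.exp (x ^ 2 / 4))⁻¹ := by
    rw [← Real.exp_add, ← Real.exp_neg]
    ring_nf
  rw [iteratedDeriv_succ_cdf_gaussianReal, abs_mul, abs_of_nonneg (by positivity), abs_mul, abs_mul,
    abs_neg_one_pow, one_mul, Real.abs_exp, mul_assoc, mul_assoc, hsplit, ← div_eq_mul_inv]
  gcongr
  exact (div_le_iff₀ (Real.exp_pos _)).2 (hC x)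

/-- A constant `K` with `2 |Φ⁽ᵐ⁾(x)| ≤ Kᵐ exp (-x² / 4)` for all `1 ≤ m ≤ v`, where `Φ` is the
standard Gaussian distribution function: the only constant in the derivative bounds below. -/
noncomputable def gaussianDerivConst (v : ℕ) : ℝ :=
  2 * (1 + ∑ m ∈ Finset.range v, ⨆ x, |iteratedDeriv (m + 1) Φ x| * Real.exp (x ^ 2 / 4))

lemma two_le_gaussianDerivConst (v : ℕ) : 2 ≤ gaussianDerivConst v := by
  have h : 0 ≤ ∑ m ∈ Finset.range v, ⨆ x, |iteratedDeriv (m + 1) Φ x| * Real.exp (x ^ 2 / 4) :=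
    Finset.sum_nonneg fun m _ ↦ Real.iSup_nonneg fun x ↦ by positivity
  unfold gaussianDerivConst
  linarith

lemma gaussianDerivConst_pos (v : ℕ) : 0 < gaussianDerivConst v :=
  two_pos.trans_le (two_le_gaussianDerivConst v)

lemma two_mul_abs_iteratedDeriv_cdf_le {m v : ℕ} (hm : m ≠ 0) (hmv : m ≤ v) (x : ℝ) :
    2 * |iteratedDeriv m Φ x| ≤ gaussianDerivConst v ^ m * Real.exp (-x ^ 2 / 4) := by
  obtain ⟨n, rfl⟩ := Nat.exists_eq_succ_of_ne_zero hm
  have hsup := le_ciSup (bddAbove_abs_iteratedDeriv_cdf_mul_exp n) x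
  have hsum := Finset.single_le_sum (f := fun m ↦ ⨆ x, |iteratedDeriv (m + 1) Φ x| *
    Real.exp (x ^ 2 / 4)) (fun m _ ↦ Real.iSup_nonneg fun x ↦ by positivity)
    (Finset.mem_range.2 hmv)
  have hK : 2 * (|iteratedDeriv (n + 1) Φ x| * Real.exp (x ^ 2 / 4)) ≤ gaussianDerivConst v := by
    unfold gaussianDerivConst
    linarith
  rw [neg_div, Real.exp_neg, ← div_eq_mul_inv, le_div_iff₀ (Real.exp_pos _), mul_assoc]
  exact hK.trans (le_self_pow₀ (one_le_two.trans (two_le_gaussianDerivConst v)) hm)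

/-- The probability that `u + s N` lies in `[lo, hi]`, for `N` standard Gaussian: the indicator of
an interval smoothed at scale `s`. -/
noncomputable def intervalProb (s lo hi u : ℝ) : ℝ :=
  (gaussianReal 0 1).real {n | u + s * n ∈ Set.Icc lo hi}

variable {s lo hi : ℝ}

lemma intervalProb_of_le (hs : 0 < s) (h : lo ≤ hi) :
    intervalProb s lo hi = fun u ↦ Φ ((hi - u) / s) - Φ ((lo - u) / s) := by
  have := nullSingletonClass_gaussianReal (μ := 0) one_ne_zero
  funext u
  rw [← measureReal_Icc_eq_cdf_sub_cdf _ (by gcongr), intervalProb]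
  congr 1 with n
  simp only [Set.mem_ofPred_eq, Set.mem_Icc, div_le_iff₀ hs, le_div_iff₀ hs, sub_le_iff_le_add,
    le_sub_iff_add_le, mul_comm n s, add_comm]

lemma intervalProb_of_lt (h : hi < lo) : intervalProb s lo hi = fun _ ↦ 0 := by
  funext u
  simp [intervalProb, Set.Icc_eq_empty h.not_ge]

lemma contDiff_cdf_comp_sub_div (s c : ℝ) : ContDiff ℝ ∞ fun u ↦ Φ ((c - u) / s) :=
  (contDiff_cdf_gaussianReal 0 one_ne_zero).comp (by fun_prop)

lemma iteratedDeriv_cdf_comp_sub_div (m : ℕ) (s c u : ℝ) :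
    iteratedDeriv m (fun u ↦ Φ ((c - u) / s)) u =
      (-s⁻¹) ^ m * iteratedDeriv m Φ ((c - u) / s) := by
  have hΦ : ContDiff ℝ m Φ :=
    (contDiff_cdf_gaussianReal 0 one_ne_zero).of_le (by exact_mod_cast le_top)
  simp_rw [div_eq_inv_mul]
  rw [iteratedDeriv_comp_const_sub m (fun x ↦ Φ (s⁻¹ * x)) c]
  simp only [iteratedDeriv_comp_const_mul hΦ, smul_eq_mul]
  rw [neg_pow s⁻¹ m, mul_assoc]

lemma contDiff_intervalProb (hs : 0 < s) : ContDiff ℝ ∞ (intervalProb s lo hi) := by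
  rcases le_or_gt lo hi with h | h
  · rw [intervalProb_of_le hs h]
    exact (contDiff_cdf_comp_sub_div s hi).sub (contDiff_cdf_comp_sub_div s lo)
  · rw [intervalProb_of_lt h]
    exact contDiff_const

lemma iteratedDeriv_intervalProb (hs : 0 < s) (m : ℕ) (lo hi u : ℝ) :
    iteratedDeriv m (intervalProb s lo hi) u =
      if lo ≤ hi then
        (-s⁻¹) ^ m * (iteratedDeriv m Φ ((hi - u) / s) - iteratedDeriv m Φ ((lo - u) / s))
      else 0 := by
  split_ifs with h
  · have hm (c : ℝ) : ContDiffAt ℝ m (fun u ↦ Φ ((c - u) / s)) u :=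
      ((contDiff_cdf_comp_sub_div s c).of_le (by exact_mod_cast le_top)).contDiffAt
    rw [intervalProb_of_le hs h, iteratedDeriv_fun_sub (hm hi) (hm lo),
      iteratedDeriv_cdf_comp_sub_div, iteratedDeriv_cdf_comp_sub_div, mul_sub]
  · rw [intervalProb_of_lt (not_le.1 h), iteratedDeriv_fun_const_zero]

lemma measurable_iteratedDeriv_intervalProb (hs : 0 < s) (m : ℕ) :
    Measurable fun p : ℝ × ℝ × ℝ ↦ iteratedDeriv m (intervalProb s p.1 p.2.1) p.2.2 := by
  have hΦ : Measurable (iteratedDeriv m Φ) :=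
    ((contDiff_cdf_gaussianReal 0 one_ne_zero).continuous_iteratedDeriv m
      (by exact_mod_cast le_top)).measurable
  simp_rw [iteratedDeriv_intervalProb hs]
  exact .ite (measurableSet_le (by fun_prop) (by fun_prop)) (by fun_prop) measurable_const

variable {m v : ℕ} {θ u X : ℝ}

lemma abs_iteratedDeriv_intervalProb_le_of_ne_zero (hs : 0 < s) (hm : m ≠ 0) (hmv : m ≤ v)
    (h : lo ≤ hi) :
    |iteratedDeriv m (intervalProb s lo hi) u| ≤ (gaussianDerivConst v / s) ^ m *
      ((Real.exp (-((hi - u) / s) ^ 2 / 4) + Real.exp (-((lo - u) / s) ^ 2 / 4)) / 2) := by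
  have hhi := two_mul_abs_iteratedDeriv_cdf_le hm hmv ((hi - u) / s)
  have hlo := two_mul_abs_iteratedDeriv_cdf_le hm hmv ((lo - u) / s)
  rw [iteratedDeriv_intervalProb hs, if_pos h, abs_mul, abs_pow, abs_neg, abs_of_pos (inv_pos.2 hs),
    div_eq_inv_mul (gaussianDerivConst v), mul_pow, mul_assoc]
  gcongr
  linarith [abs_sub (iteratedDeriv m Φ ((hi - u) / s)) (iteratedDeriv m Φ ((lo - u) / s))]

lemma abs_iteratedDeriv_intervalProb_le (hs : 0 < s) (hmv : m ≤ v) :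
    |iteratedDeriv m (intervalProb s lo hi) u| ≤ (gaussianDerivConst v / s) ^ m := by
  have hK := gaussianDerivConst_pos v
  rcases eq_or_ne m 0 with rfl | hm
  · rw [iteratedDeriv_zero, pow_zero, intervalProb, abs_of_nonneg measureReal_nonneg]
    exact measureReal_le_one
  rcases le_or_gt lo hi with h | h
  · have hexp (x : ℝ) : Real.exp (-x ^ 2 / 4) ≤ 1 :=
      Real.exp_le_one_iff.2 (by linarith [sq_nonneg x])
    refine (abs_iteratedDeriv_intervalProb_le_of_ne_zero hs hm hmv h).trans
      (mul_le_of_le_one_right (by positivity) ?_)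
    linarith [hexp ((hi - u) / s), hexp ((lo - u) / s)]
  · rw [iteratedDeriv_intervalProb hs, if_neg h.not_ge, abs_zero]
    positivity

lemma exp_neg_sq_div_four_le (hs : s ≠ 0) (θ x : ℝ) :
    Real.exp (-(x / s) ^ 2 / 4) ≤ Real.exp (θ * x + (θ * s) ^ 2) := by
  have hx : θ * x = θ * s * (x / s) := by field_simp
  rw [hx, Real.exp_le_exp]
  linarith [sq_nonneg (x / s / 2 + θ * s)]

lemma intervalProb_le_exp (hX : ∀ x ∈ Set.Icc lo hi, θ * x ≤ X) :
    intervalProb s lo hi u ≤ Real.exp (X - θ * u + (θ * s) ^ 2) := by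
  have hinteg : Integrable (fun n ↦ Real.exp (-(θ * s) * n)) (gaussianReal 0 1) :=
    integrable_exp_mul_gaussianReal _
  have hmgf : ∫ n, Real.exp (-(θ * s) * n) ∂gaussianReal 0 1 = Real.exp ((θ * s) ^ 2 / 2) := by
    simpa [mgf] using mgf_gaussianReal (p := gaussianReal 0 1) (X := id) Measure.map_id (-(θ * s))
  have hmeas : MeasurableSet {n : ℝ | u + s * n ∈ Set.Icc lo hi} :=
    measurableSet_Icc.preimage (by fun_prop)
  calc intervalProb s lo hi u
      = ∫ n, {n | u + s * n ∈ Set.Icc lo hi}.indicator 1 n ∂gaussianReal 0 1 :=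
        (integral_indicator_one hmeas).symm
    _ ≤ ∫ n, Real.exp (X - θ * u) * Real.exp (-(θ * s) * n) ∂gaussianReal 0 1 := by
        refine integral_mono ((integrable_const 1).indicator hmeas) (hinteg.const_mul _) fun n ↦
          Set.indicator_apply_le' (fun hn ↦ ?_) fun _ ↦ by positivity
        rw [← Real.exp_add, Pi.one_apply, Real.one_le_exp_iff]
        linarith [hX _ hn]
    _ = Real.exp (X - θ * u + (θ * s) ^ 2 / 2) := by
        rw [integral_const_mul, hmgf, ← Real.exp_add]
    _ ≤ Real.exp (X - θ * u + (θ * s) ^ 2) := by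
        rw [Real.exp_le_exp]
        linarith [sq_nonneg (θ * s)]

lemma abs_iteratedDeriv_intervalProb_le_exp (hs : 0 < s) (hmv : m ≤ v)
    (hX : ∀ x ∈ Set.Icc lo hi, θ * x ≤ X) :
    |iteratedDeriv m (intervalProb s lo hi) u| ≤
      (gaussianDerivConst v / s) ^ m * Real.exp (X - θ * u + (θ * s) ^ 2) := by
  have hK := gaussianDerivConst_pos v
  rcases eq_or_ne m 0 with rfl | hm
  · rw [iteratedDeriv_zero, pow_zero, one_mul, intervalProb, abs_of_nonneg measureReal_nonneg]
    exact intervalProb_le_exp hX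
  rcases le_or_gt lo hi with h | h
  · refine (abs_iteratedDeriv_intervalProb_le_of_ne_zero hs hm hmv h).trans ?_
    have hexp (x : ℝ) (hx : x ∈ Set.Icc lo hi) :
        Real.exp (-((x - u) / s) ^ 2 / 4) ≤ Real.exp (X - θ * u + (θ * s) ^ 2) :=
      (exp_neg_sq_div_four_le hs.ne' θ (x - u)).trans
        (Real.exp_le_exp.2 (by linarith [hX x hx]))
    gcongr
    linarith [hexp hi (Set.right_mem_Icc.2 h), hexp lo (Set.left_mem_Icc.2 h)]
  · rw [iteratedDeriv_intervalProb hs, if_neg h.not_ge, abs_zero]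
    positivity

lemma abs_iteratedDeriv_intervalProb_le_exp_add_exp (hs : 0 < s) (hm : m ≠ 0) (hmv : m ≤ v)
    (θ : ℝ) :
    |iteratedDeriv m (intervalProb s lo hi) u| ≤ (gaussianDerivConst v / s) ^ m *
      ((Real.exp (θ * (u - hi) + (θ * s) ^ 2) +
        Real.exp (θ * (lo - u) + (θ * s) ^ 2)) / 2) := by
  have hK := gaussianDerivConst_pos v
  rcases le_or_gt lo hi with h | h
  · refine (abs_iteratedDeriv_intervalProb_le_of_ne_zero hs hm hmv h).trans ?_
    rw [← neg_sub u hi, neg_div s, neg_sq]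
    grw [exp_neg_sq_div_four_le hs.ne' θ (u - hi), exp_neg_sq_div_four_le hs.ne' θ (lo - u)]
  · rw [iteratedDeriv_intervalProb hs, if_neg h.not_ge, abs_zero]
    positivity

end GaussianCDF

section CenteredGaussian

open scoped Matrix

variable {ι : Type*} [Fintype ι] [DecidableEq ι] {S T : Matrix ι ι ℝ}

/-- The centred Gaussian law with covariance matrix `S`, carried by the plain function space
`ι → ℝ` (with its sup norm) instead of `EuclideanSpace ℝ ι`. -/
noncomputable def centeredGaussian (S : Matrix ι ι ℝ) : Measure (ι → ℝ) :=
  (multivariateGaussian 0 S).map WithLp.ofLp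

instance (S : Matrix ι ι ℝ) : IsProbabilityMeasure (centeredGaussian S) :=
  Measure.isProbabilityMeasure_map (by fun_prop)

lemma posSemidef_sub_smul_one (hS : S.IsHermitian) {c : ℝ}
    (hc : ∀ x : ι → ℝ, ∑ j, x j ^ 2 = 1 → c ≤ ∑ j, ∑ k, x j * S j k * x k) :
    (S - c • 1).PosSemidef := by
  refine .of_dotProduct_mulVec_nonneg (hS.sub (Matrix.isHermitian_one.smul (.all c))) fun x ↦ ?_
  have hform : star x ⬝ᵥ (S - c • 1) *ᵥ x =
      (∑ j, ∑ k, x j * S j k * x k) - c * ∑ j, x j ^ 2 := by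
    rw [← Matrix.toBilin'_apply, Matrix.toBilin'_apply', Matrix.sub_mulVec, dotProduct_sub,
      Matrix.smul_mulVec, Matrix.one_mulVec, dotProduct_smul, star_trivial, smul_eq_mul]
    simp only [dotProduct, sq]
  rw [hform, sub_nonneg]
  rcases (Finset.sum_nonneg fun j _ ↦ sq_nonneg (x j)).eq_or_lt' with hx | hx
  · have hx0 (j : ι) : x j = 0 := by
      simpa using (Finset.sum_eq_zero_iff_of_nonneg fun j _ ↦ sq_nonneg (x j)).1 hx j
        (Finset.mem_univ j)
    simp [hx0]
  · set r := ∑ j, x j ^ 2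
    have h := hc (fun j ↦ x j / √r) (by
      simp_rw [div_pow, Real.sq_sqrt hx.le, ← Finset.sum_div]
      exact div_self hx.ne')
    have hscale (j k : ι) : x j / √r * S j k * (x k / √r) = x j * S j k * x k / r := by
      rw [div_mul_eq_mul_div, div_mul_div_comm, Real.mul_self_sqrt hx.le]
    simp only [hscale, ← Finset.sum_div] at h
    exact (le_div_iff₀ hx).1 h

lemma strongDual_pi_apply (L : StrongDual ℝ (ι → ℝ)) (z : ι → ℝ) :
    L z = ∑ j, L (Pi.single j 1) * z j := by
  conv_lhs => rw [pi_eq_sum_univ' z]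
  simp [mul_comm]

lemma charFunDual_centeredGaussian (hS : S.PosSemidef) (L : StrongDual ℝ (ι → ℝ)) :
    charFunDual (centeredGaussian S) L =
      Complex.exp (-((fun j ↦ L (Pi.single j 1)) ⬝ᵥ S *ᵥ fun j ↦ L (Pi.single j 1) : ℝ) / 2) := by
  have h := charFun_multivariateGaussian (μ := 0) hS (WithLp.toLp 2 fun j ↦ L (Pi.single j 1))
  rw [charFun_apply, inner_zero_right] at h
  rw [charFunDual_apply, centeredGaussian, integral_map (by fun_prop) (by fun_prop)]
  convert h using 2
  · ext y
    rw [strongDual_pi_apply]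
    simp [PiLp.inner_apply, mul_comm]
  · simp only [Complex.ofReal_zero, zero_mul, zero_sub, neg_div]

lemma centeredGaussian_add (hS : S.PosSemidef) (hT : T.PosSemidef) :
    centeredGaussian (S + T) = centeredGaussian S ∗ centeredGaussian T := by
  refine Measure.ext_of_charFunDual (funext fun L ↦ ?_)
  rw [charFunDual_conv, charFunDual_centeredGaussian (hS.add hT), charFunDual_centeredGaussian hS,
    charFunDual_centeredGaussian hT, ← Complex.exp_add, Matrix.add_mulVec, dotProduct_add]
  congr 1
  push_cast
  ring

lemma map_smul_centeredGaussian (hS : S.PosSemidef) (σ : ℝ) :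
    (centeredGaussian S).map (σ • ·) = centeredGaussian (σ ^ 2 • S) := by
  refine Measure.ext_of_charFunDual (funext fun L ↦ ?_)
  change charFunDual ((centeredGaussian S).map
    (σ • ContinuousLinearMap.id ℝ (ι → ℝ) : (ι → ℝ) →L[ℝ] (ι → ℝ))) L = _
  rw [charFunDual_map, charFunDual_centeredGaussian hS,
    charFunDual_centeredGaussian (hS.smul (sq_nonneg σ))]
  congr 4
  simp only [ContinuousLinearMap.comp_smul, ContinuousLinearMap.comp_id,
    smul_apply, Matrix.smul_mulVec, dotProduct_smul]
  change (σ • fun j ↦ L (Pi.single j 1)) ⬝ᵥ S *ᵥ (σ • fun j ↦ L (Pi.single j 1)) = _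
  rw [smul_dotProduct, Matrix.mulVec_smul, dotProduct_smul, smul_smul, sq]

lemma centeredGaussian_one :
    centeredGaussian (1 : Matrix ι ι ℝ) = Measure.pi fun _ ↦ gaussianReal 0 1 := by
  rw [centeredGaussian, multivariateGaussian_zero_one, ← map_pi_eq_stdGaussian,
    Measure.map_map (by fun_prop) (by fun_prop)]
  exact Measure.map_id

lemma centeredGaussian_eq_conv_map_smul_pi {σ : ℝ} (hS : (S - σ ^ 2 • 1).PosSemidef) :
    centeredGaussian S = centeredGaussian (S - σ ^ 2 • 1) ∗
      (Measure.pi fun _ ↦ gaussianReal 0 1).map (σ • ·) := by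
  rw [← centeredGaussian_one, map_smul_centeredGaussian Matrix.PosSemidef.one,
    ← centeredGaussian_add hS (Matrix.PosSemidef.one.smul (sq_nonneg σ)), sub_add_cancel]

lemma map_eval_centeredGaussian (hS : S.PosSemidef) (j : ι) :
    (centeredGaussian S).map (fun y ↦ y j) = gaussianReal 0 (S j j).toNNReal := by
  rw [centeredGaussian, Measure.map_map (by fun_prop) (by fun_prop)]
  exact (measurePreserving_eval_multivariateGaussian (μ := 0) hS).map_eq

lemma integrable_exp_mul_eval_centeredGaussian (hS : S.PosSemidef) (j : ι) (c : ℝ) :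
    Integrable (fun y ↦ Real.exp (c * y j)) (centeredGaussian S) := by
  have h := integrable_exp_mul_gaussianReal (μ := 0) (v := (S j j).toNNReal) c
  rw [← map_eval_centeredGaussian hS] at h
  exact h.comp_measurable (by fun_prop)

lemma integral_exp_mul_eval_centeredGaussian (hS : S.PosSemidef) (j : ι) (c : ℝ) :
    ∫ y, Real.exp (c * y j) ∂centeredGaussian S = Real.exp (S j j * c ^ 2 / 2) := by
  have h := mgf_gaussianReal (map_eval_centeredGaussian hS j) c
  rwa [zero_mul, zero_add, Real.coe_toNNReal _ hS.diag_nonneg] at h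

lemma integrable_cosh_mul_eval_centeredGaussian (hS : S.PosSemidef) (j : ι) (c : ℝ) :
    Integrable (fun y ↦ Real.cosh (c * y j)) (centeredGaussian S) := by
  simp_rw [Real.cosh_eq, ← neg_mul]
  exact ((integrable_exp_mul_eval_centeredGaussian hS j c).add
    (integrable_exp_mul_eval_centeredGaussian hS j (-c))).div_const 2

lemma integral_cosh_mul_eval_centeredGaussian (hS : S.PosSemidef) (j : ι) (c : ℝ) :
    ∫ y, Real.cosh (c * y j) ∂centeredGaussian S = Real.exp (S j j * c ^ 2 / 2) := by
  simp_rw [Real.cosh_eq, ← neg_mul]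
  rw [integral_div, integral_add (integrable_exp_mul_eval_centeredGaussian hS j c)
    (integrable_exp_mul_eval_centeredGaussian hS j (-c)),
    integral_exp_mul_eval_centeredGaussian hS, integral_exp_mul_eval_centeredGaussian hS, neg_sq,
    add_self_div_two]

lemma eq_centeredGaussian (hS : S.PosSemidef) {γ : Measure (ι → ℝ)} [IsProbabilityMeasure γ]
    (hγ : ∀ l : (ι → ℝ) →ₗ[ℝ] ℝ, ∃ r : NNReal, γ.map l = gaussianReal 0 r)
    (hcov : ∀ j k, ∫ z, z j * z k ∂γ = S j k) :
    γ = centeredGaussian S := by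
  have : IsGaussian γ := isGaussian_of_map_eq_gaussianReal fun L ↦
    ⟨0, _, (hγ L.toLinearMap).choose_spec⟩
  have hmean (L : StrongDual ℝ (ι → ℝ)) : γ[L] = 0 := by
    obtain ⟨r, hr : γ.map L = gaussianReal 0 r⟩ := hγ L.toLinearMap
    rw [← integral_id_gaussianReal (μ := 0) (v := r), ← hr,
      integral_map (by fun_prop) (by fun_prop)]
  have hmemLp (j : ι) : MemLp (fun z ↦ z j) 2 γ :=
    IsGaussian.memLp_dual γ (ContinuousLinearMap.proj j) 2 (by simp)
  have hvar (L : StrongDual ℝ (ι → ℝ)) : Var[L; γ] =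
      (fun j ↦ L (Pi.single j 1)) ⬝ᵥ S *ᵥ fun j ↦ L (Pi.single j 1) := by
    have hcov' (j k : ι) : cov[fun z ↦ z j, fun z ↦ z k; γ] = S j k := by
      have hj : γ[fun z : ι → ℝ ↦ z j] = 0 := hmean (ContinuousLinearMap.proj j)
      rw [covariance_eq_sub (hmemLp j) (hmemLp k), hj, zero_mul, sub_zero]
      exact hcov j k
    conv_lhs => rw [show ⇑L = fun z ↦ ∑ j, L (Pi.single j 1) * z j from
      funext (strongDual_pi_apply L)]
    rw [variance_fun_sum fun j ↦ (hmemLp j).const_mul _]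
    simp only [covariance_const_mul_left, covariance_const_mul_right, hcov', dotProduct,
      Matrix.mulVec, Finset.mul_sum]
    exact Finset.sum_congr rfl fun j _ ↦ Finset.sum_congr rfl fun k _ ↦ by ring
  refine Measure.ext_of_charFunDual (funext fun L ↦ ?_)
  rw [IsGaussian.charFunDual_eq, charFunDual_centeredGaussian hS, ← hvar L, integral_complex_ofReal,
    hmean L, Complex.ofReal_zero, zero_mul, zero_sub, neg_div]

end CenteredGaussian

section SmoothedBox

variable {ι : Type*} [Fintype ι] {s : ℝ} {lo hi : ι → ℝ}

/-- The partial derivative `∂^α` at `w` of the indicator of the box `∏ j, [lo j, hi j]` smoothed at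
scale `s`, written as a product over the coordinates. -/
noncomputable def boxProbDeriv (s : ℝ) (lo hi : ι → ℝ) (α : ι → ℕ) (w : ι → ℝ) : ℝ :=
  ∏ j, iteratedDeriv (α j) (intervalProb s (lo j) (hi j)) (w j)

lemma isPartialDerivFamily_boxProbDeriv [DecidableEq ι] (hs : 0 < s) :
    IsPartialDerivFamily (boxProbDeriv s lo hi) :=
  .prod_iteratedDeriv fun _ ↦ contDiff_intervalProb hs

lemma boxProbDeriv_zero (s : ℝ) (lo hi w : ι → ℝ) :
    boxProbDeriv s lo hi 0 w =
      (Measure.pi fun _ ↦ gaussianReal 0 1).real {n | w + s • n ∈ Set.Icc lo hi} := by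
  have hset : {n : ι → ℝ | w + s • n ∈ Set.Icc lo hi} =
      Set.univ.pi fun j ↦ {n | w j + s * n ∈ Set.Icc (lo j) (hi j)} := by
    ext n
    simp [Pi.le_def, forall_and]
  rw [hset, measureReal_def, Measure.pi_pi, ENNReal.toReal_prod]
  rfl

lemma measurable_boxProbDeriv (hs : 0 < s) (α : ι → ℕ) :
    Measurable fun p : (ι → ℝ) × (ι → ℝ) × (ι → ℝ) ↦ boxProbDeriv s p.1 p.2.1 α p.2.2 :=
  Finset.measurable_fun_prod _ fun j _ ↦
    (measurable_iteratedDeriv_intervalProb hs (α j)).comp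
      (f := fun p : (ι → ℝ) × (ι → ℝ) × (ι → ℝ) ↦ (p.1 j, p.2.1 j, p.2.2 j)) (by fun_prop)

variable {α : ι → ℕ} {w : ι → ℝ}

lemma abs_boxProbDeriv_le (hs : 0 < s) :
    |boxProbDeriv s lo hi α w| ≤ (gaussianDerivConst (∑ j, α j) / s) ^ ∑ j, α j := by
  rw [boxProbDeriv, Finset.abs_prod, ← Finset.prod_pow_eq_pow_sum]
  exact Finset.prod_le_prod (fun j _ ↦ abs_nonneg _) fun j hj ↦
    abs_iteratedDeriv_intervalProb_le hs (Finset.single_le_sum (by simp) hj)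

lemma abs_boxProbDeriv_le_mul (hs : 0 < s) (k : ι) {X : ℝ}
    (hX : |iteratedDeriv (α k) (intervalProb s (lo k) (hi k)) (w k)| ≤
      (gaussianDerivConst (∑ j, α j) / s) ^ α k * X) :
    |boxProbDeriv s lo hi α w| ≤ (gaussianDerivConst (∑ j, α j) / s) ^ (∑ j, α j) * X := by
  classical
  have hrest : ∏ j ∈ Finset.univ.erase k,
      |iteratedDeriv (α j) (intervalProb s (lo j) (hi j)) (w j)| ≤
      ∏ j ∈ Finset.univ.erase k, (gaussianDerivConst (∑ j, α j) / s) ^ α j :=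
    Finset.prod_le_prod (fun j _ ↦ abs_nonneg _) fun j _ ↦
      abs_iteratedDeriv_intervalProb_le hs (Finset.single_le_sum (by simp) (Finset.mem_univ j))
  have hK := gaussianDerivConst_pos (∑ j, α j)
  rw [boxProbDeriv, Finset.abs_prod, ← Finset.prod_pow_eq_pow_sum,
    ← Finset.prod_erase_mul Finset.univ _ (Finset.mem_univ k),
    ← Finset.prod_erase_mul Finset.univ _ (Finset.mem_univ k), mul_assoc]
  exact mul_le_mul hrest hX (abs_nonneg _) (by positivity)

end SmoothedBox

section Mixture

lemma gphi_eq_measureReal {φ : ℝ} (hφ : 0 < φ) (M : ℝ) :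
    gphi φ M = (volume : Measure unitInterval).real {t | M ≤ t / φ} := by
  simp only [le_div_iff₀ hφ, mul_comm M φ]
  unfold gphi
  split_ifs with h0 h1
  · have huniv : {t : unitInterval | φ * M ≤ t} = Set.univ :=
      Set.eq_univ_of_forall fun t ↦ (mul_nonpos_of_nonneg_of_nonpos hφ.le h0).trans t.2.1
    rw [huniv, probReal_univ]
  · have hM : φ * M ≤ 1 := ((lt_div_iff₀' hφ).1 h1).le
    have hIci : {t : unitInterval | φ * M ≤ t} =
        Set.Ici ⟨φ * M, mul_nonneg hφ.le (not_le.1 h0).le, hM⟩ := rfl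
    rw [hIci, measureReal_def, unitInterval.volume_Ici, ENNReal.toReal_ofReal (sub_nonneg.2 hM)]
  · have hsub : {t : unitInterval | φ * M ≤ t} ⊆ {1} := fun t ht ↦
      le_antisymm t.2.2 (((div_le_iff₀' hφ).1 (not_lt.1 h1)).trans ht)
    rw [measureReal_def, measure_mono_null hsub (measure_singleton 1), ENNReal.toReal_zero]

lemma mrect_eq_measureReal {d : ℕ} (a b : Fin d → ℝ) {φ : ℝ} (hφ : 0 < φ) (u : Fin d → ℝ) :
    mrect d a b φ u = (volume : Measure unitInterval).real
      {t | u ∈ Set.Icc (fun j ↦ a j - t / φ) (fun j ↦ b j + t / φ)} := by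
  rw [mrect, gphi_eq_measureReal hφ]
  congr 1 with t
  have hbdd : BddAbove (Set.range fun j ↦ max (u j - b j) (a j - u j)) :=
    (Set.finite_range _).bddAbove
  have hsup : (⨆ j, max (u j - b j) (a j - u j)) ≤ t / φ ↔
      ∀ j, max (u j - b j) (a j - u j) ≤ t / φ :=
    ⟨fun h j ↦ (le_ciSup hbdd j).trans h, fun h ↦ Real.iSup_le h (div_nonneg t.2.1 hφ.le)⟩
  simp only [Set.mem_ofPred_eq, hsup, max_le_iff, forall_and, Set.mem_Icc, Pi.le_def,
    sub_le_iff_le_add, and_comm, add_comm]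

lemma integral_measureReal_prodMk_swap {X Y : Type*} [MeasurableSpace X] [MeasurableSpace Y]
    (μ : Measure X) (ν : Measure Y) [IsFiniteMeasure μ] [IsFiniteMeasure ν] {s : Set (X × Y)}
    (hs : MeasurableSet s) :
    ∫ x, ν.real {y | (x, y) ∈ s} ∂μ = ∫ y, μ.real {x | (x, y) ∈ s} ∂ν := by
  have hleft : Measurable fun x ↦ ν {y | (x, y) ∈ s} := measurable_measure_prodMk_left hs
  have hright : Measurable fun y ↦ μ {x | (x, y) ∈ s} := measurable_measure_prodMk_right hs
  simp only [measureReal_def]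
  rw [integral_toReal hleft.aemeasurable (ae_of_all _ fun x ↦ measure_lt_top _ _),
    integral_toReal hright.aemeasurable (ae_of_all _ fun y ↦ measure_lt_top _ _)]
  exact congrArg _ ((Measure.prod_apply hs).symm.trans (Measure.prod_apply_symm hs))

/-- The derivative `∂^α` at `w` of the probability that `w + ε y + s N` lies in the closed box
`∏ j, [a j - t / φ, b j + t / φ]`, for `N` standard Gaussian. The pair `p = (y, t)` consists of the
coarse part of the Gaussian and of the level in the layer-cake formula for `mrect`. -/
noncomputable def layerDeriv {ι : Type*} [Fintype ι] (a b : ι → ℝ) (φ ε s : ℝ)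
    (p : (ι → ℝ) × unitInterval) : (ι → ℕ) → (ι → ℝ) → ℝ :=
  boxProbDeriv s (fun j ↦ a j - p.2 / φ - ε * p.1 j) (fun j ↦ b j + p.2 / φ - ε * p.1 j)

section LayerDeriv

variable {ι : Type*} [Fintype ι] {s : ℝ}

lemma measurable_layerDeriv (a b : ι → ℝ) (φ ε : ℝ) (hs : 0 < s) (α : ι → ℕ) (w : ι → ℝ) :
    Measurable fun p ↦ layerDeriv a b φ ε s p α w :=
  (measurable_boxProbDeriv hs α).comp (f := fun p : (ι → ℝ) × unitInterval ↦
    (fun j ↦ a j - p.2 / φ - ε * p.1 j, fun j ↦ b j + p.2 / φ - ε * p.1 j, w)) (by fun_prop)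

lemma integrable_layerDeriv (a b : ι → ℝ) (φ ε : ℝ) (hs : 0 < s) (α : ι → ℕ) (w : ι → ℝ)
    (μ : Measure ((ι → ℝ) × unitInterval)) [IsFiniteMeasure μ] :
    Integrable (fun p ↦ layerDeriv a b φ ε s p α w) μ :=
  .of_bound (measurable_layerDeriv a b φ ε hs α w).aestronglyMeasurable _
    (ae_of_all _ fun _ ↦ abs_boxProbDeriv_le hs)

lemma layerDeriv_zero (a b : ι → ℝ) (φ ε σ : ℝ) (p : (ι → ℝ) × unitInterval) (w : ι → ℝ) :
    layerDeriv a b φ ε (ε * σ) p 0 w = (Measure.pi fun _ ↦ gaussianReal 0 1).real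
      {n | w + ε • (p.1 + σ • n) ∈ Set.Icc (fun j ↦ a j - p.2 / φ) (fun j ↦ b j + p.2 / φ)} := by
  rw [layerDeriv, boxProbDeriv_zero]
  congr 1 with n
  simp only [Set.mem_ofPred_eq, Set.mem_Icc, Pi.le_def, Pi.add_apply, Pi.smul_apply, smul_eq_mul,
    sub_le_iff_le_add, le_sub_iff_add_le, mul_add, add_assoc, add_left_comm, add_comm, mul_assoc]

end LayerDeriv

variable {d : ℕ} {φ ε σ : ℝ} (a b : Fin d → ℝ)

lemma measurableSet_add_smul_mem_Icc (φ ε : ℝ) (w : Fin d → ℝ) :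
    MeasurableSet {q : (Fin d → ℝ) × unitInterval |
      w + ε • q.1 ∈ Set.Icc (fun j ↦ a j - q.2 / φ) (fun j ↦ b j + q.2 / φ)} :=
  (measurableSet_le (f := fun q : (Fin d → ℝ) × unitInterval ↦ fun j ↦ a j - q.2 / φ)
    (g := fun q ↦ w + ε • q.1) (by fun_prop) (by fun_prop)).inter
    (measurableSet_le (f := fun q : (Fin d → ℝ) × unitInterval ↦ w + ε • q.1)
      (g := fun q ↦ fun j ↦ b j + q.2 / φ) (by fun_prop) (by fun_prop))

variable (ν : Measure (Fin d → ℝ)) [IsProbabilityMeasure ν]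

lemma rhoFn_conv_eq_integral (hφ : 0 < φ) (hs : 0 < ε * σ) (w : Fin d → ℝ) :
    rhoFn d a b φ ε (ν ∗ (Measure.pi fun _ ↦ gaussianReal 0 1).map (σ • ·)) w =
      ∫ p, layerDeriv a b φ ε (ε * σ) p 0 w ∂ν.prod volume := by
  let box : Set ((Fin d → ℝ) × unitInterval) :=
    {q | w + ε • q.1 ∈ Set.Icc (fun j ↦ a j - q.2 / φ) (fun j ↦ b j + q.2 / φ)}
  have hbox : MeasurableSet box := measurableSet_add_smul_mem_Icc a b φ ε w
  have hmeas : Measurable fun z ↦ (volume : Measure unitInterval).real {t | (z, t) ∈ box} :=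
    (measurable_measure_prodMk_left hbox).ennreal_toReal
  have : IsProbabilityMeasure ((Measure.pi fun _ : Fin d ↦ gaussianReal 0 1).map (σ • ·)) :=
    Measure.isProbabilityMeasure_map (by fun_prop)
  have hinteg (μ : Measure (Fin d → ℝ)) [IsProbabilityMeasure μ] :
      Integrable (fun z ↦ (volume : Measure unitInterval).real {t | (z, t) ∈ box}) μ :=
    .of_bound hmeas.aestronglyMeasurable 1 (ae_of_all _ fun z ↦ by
      rw [Real.norm_of_nonneg measureReal_nonneg]
      exact measureReal_le_one)
  have hrho (μ : Measure (Fin d → ℝ)) : rhoFn d a b φ ε μ w =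
      ∫ z, (volume : Measure unitInterval).real {t | (z, t) ∈ box} ∂μ :=
    integral_congr_ae (ae_of_all _ fun z ↦ mrect_eq_measureReal a b hφ _)
  rw [hrho, integral_conv (hinteg _), integral_prod _ (integrable_layerDeriv a b φ ε hs 0 w _)]
  refine integral_congr_ae (ae_of_all _ fun y ↦ ?_)
  have htranslate :
      Measurable fun z ↦ (volume : Measure unitInterval).real {t | (y + z, t) ∈ box} :=
    hmeas.comp (measurable_const_add y)
  have hshift : Measurable fun q : (Fin d → ℝ) × unitInterval ↦ (y + σ • q.1, q.2) := by fun_prop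
  simp only [layerDeriv_zero]
  rw [integral_map (by fun_prop) htranslate.aestronglyMeasurable]
  exact integral_measureReal_prodMk_swap _ _ (hshift hbox)

lemma iteratedFDeriv_rhoFn_conv_apply_single (hφ : 0 < φ) (hs : 0 < ε * σ) {v : ℕ}
    (J : Fin v → Fin d) (w : Fin d → ℝ) :
    iteratedFDeriv ℝ v
        (rhoFn d a b φ ε (ν ∗ (Measure.pi fun _ ↦ gaussianReal 0 1).map (σ • ·))) w
        (fun i ↦ Pi.single (J i) 1) =
      ∫ p, layerDeriv a b φ ε (ε * σ) p (∑ i, Pi.single (J i) 1) w ∂ν.prod volume := by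
  rw [funext fun w ↦ rhoFn_conv_eq_integral a b ν hφ hs w]
  exact (IsPartialDerivFamily.integral (f := layerDeriv a b φ ε (ε * σ))
    (fun p ↦ isPartialDerivFamily_boxProbDeriv hs) (measurable_layerDeriv a b φ ε hs)
    fun p α x ↦ abs_boxProbDeriv_le hs).iteratedFDeriv_apply_single J w

end Mixture

section Decay

lemma le_one_of_posSemidef_sub_sq_smul_one {ι : Type*} [DecidableEq ι] {S : Matrix ι ι ℝ} {σ : ℝ}
    (hS : (S - σ ^ 2 • 1).PosSemidef) {j : ι} (hj : S j j ≤ 1) : σ ≤ 1 := by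
  have hdiag : 0 ≤ S j j - σ ^ 2 := by simpa using hS.diag_nonneg (i := j)
  exact (le_abs_self σ).trans ((sq_le_one_iff_abs_le_one σ).1 (by linarith))

variable {ε σ δ : ℝ}

lemma exp_chernoff_le (hε : 0 < ε) (hδ : 0 ≤ δ) (hσ : |σ| ≤ 1) {X : ℝ} (hX : X ≤ -(2 * ε * δ))
    (Y : ℝ) :
    Real.exp (δ / (2 * ε) * (X + ε * Y) + (δ / (2 * ε) * (ε * σ)) ^ 2) ≤
      Real.exp (-(3 / 4) * δ ^ 2) * Real.exp (δ / 2 * Y) := by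
  have hmain : δ / (2 * ε) * X ≤ -δ ^ 2 :=
    calc δ / (2 * ε) * X ≤ δ / (2 * ε) * -(2 * ε * δ) := by gcongr
      _ = -δ ^ 2 := by field_simp
  have hσ2 : δ ^ 2 * σ ^ 2 ≤ δ ^ 2 :=
    mul_le_of_le_one_right (sq_nonneg δ) ((sq_le_one_iff_abs_le_one σ).2 hσ)
  have hexpand : δ / (2 * ε) * (X + ε * Y) + (δ / (2 * ε) * (ε * σ)) ^ 2 =
      δ / (2 * ε) * X + δ / 2 * Y + δ ^ 2 * σ ^ 2 / 4 := by
    field_simp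
    ring
  rw [← Real.exp_add, hexpand, Real.exp_le_exp]
  linarith

lemma exp_le_two_mul_cosh (x : ℝ) : Real.exp x ≤ 2 * Real.cosh x := by
  rw [Real.cosh_eq]
  linarith [Real.exp_pos (-x)]

variable {lo hi u Y : ℝ} {m v : ℕ}

lemma abs_iteratedDeriv_intervalProb_le_of_mem (hε : 0 < ε) (hσ : 0 < σ) (hσ1 : σ ≤ 1)
    (hδ : 0 ≤ δ) (hm : m ≠ 0) (hmv : m ≤ v) (hu : u ∈ Set.Icc (lo + 2 * ε * δ) (hi - 2 * ε * δ)) :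
    |iteratedDeriv m (intervalProb (ε * σ) (lo - ε * Y) (hi - ε * Y)) u| ≤
      (gaussianDerivConst v / (ε * σ)) ^ m *
        (2 * Real.exp (-(3 / 4) * δ ^ 2) * Real.cosh (δ / 2 * Y)) := by
  have hK := gaussianDerivConst_pos v
  have hσ' : |σ| ≤ 1 := (abs_of_pos hσ).trans_le hσ1
  refine (abs_iteratedDeriv_intervalProb_le_exp_add_exp (mul_pos hε hσ) hm hmv
    (δ / (2 * ε))).trans (mul_le_mul_of_nonneg_left ?_ (by positivity))
  have hright := exp_chernoff_le hε hδ hσ' (X := u - hi) (by linarith [hu.2]) Y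
  have hleft := exp_chernoff_le hε hδ hσ' (X := lo - u) (by linarith [hu.1]) (-Y)
  rw [mul_neg, mul_neg] at hleft
  rw [show u - (hi - ε * Y) = u - hi + ε * Y by ring,
    show lo - ε * Y - u = lo - u + -(ε * Y) by ring, Real.cosh_eq]
  grw [hright, hleft]
  rw [← mul_add, mul_div_assoc, mul_assoc 2]
  exact le_mul_of_one_le_left (by positivity) one_le_two

lemma abs_iteratedDeriv_intervalProb_le_of_le_or_le (hε : 0 < ε) (hσ : 0 < σ) (hσ1 : σ ≤ 1)
    (hδ : 0 ≤ δ) (hmv : m ≤ v) (hu : u ≤ lo - 2 * ε * δ ∨ hi + 2 * ε * δ ≤ u) :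
    |iteratedDeriv m (intervalProb (ε * σ) (lo - ε * Y) (hi - ε * Y)) u| ≤
      (gaussianDerivConst v / (ε * σ)) ^ m *
        (2 * Real.exp (-(3 / 4) * δ ^ 2) * Real.cosh (δ / 2 * Y)) := by
  have hK := gaussianDerivConst_pos v
  have hσ' : |σ| ≤ 1 := (abs_of_pos hσ).trans_le hσ1
  have hθ : 0 ≤ δ / (2 * ε) := by positivity
  rw [mul_assoc 2, mul_left_comm 2]
  rcases hu with hu | hu
  · have hX (x : ℝ) (hx : x ∈ Set.Icc (lo - ε * Y) (hi - ε * Y)) :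
        -(δ / (2 * ε)) * x ≤ -(δ / (2 * ε)) * (lo - ε * Y) :=
      mul_le_mul_of_nonpos_left hx.1 (neg_nonpos.2 hθ)
    have hchernoff := exp_chernoff_le hε hδ hσ' (X := u - lo) (by linarith) Y
    grw [abs_iteratedDeriv_intervalProb_le_exp (mul_pos hε hσ) hmv hX,
      ← exp_le_two_mul_cosh (δ / 2 * Y), ← hchernoff]
    apply le_of_eq
    ring_nf
  · have hX (x : ℝ) (hx : x ∈ Set.Icc (lo - ε * Y) (hi - ε * Y)) :
        δ / (2 * ε) * x ≤ δ / (2 * ε) * (hi - ε * Y) := by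
      gcongr
      exact hx.2
    have hchernoff := exp_chernoff_le hε hδ hσ' (X := hi - u) (by linarith) (-Y)
    rw [← Real.cosh_neg, ← mul_neg]
    grw [abs_iteratedDeriv_intervalProb_le_exp (mul_pos hε hσ) hmv hX,
      ← exp_le_two_mul_cosh (δ / 2 * -Y), ← hchernoff]
    apply le_of_eq
    ring_nf

/-- `w` lies at distance at least `r` from the boundary layer of the box `∏ j, [a j, b j]`, which
is everything between the box itself and its enlargement by `h`: either `w` is at depth `r` inside
the box, or some coordinate leaves the enlarged box by `r`. -/
def IsFarFromBoundary {ι : Type*} (a b : ι → ℝ) (h r : ℝ) (w : ι → ℝ) : Prop :=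
  (∀ j, w j ∈ Set.Icc (a j + r) (b j - r)) ∨ ∃ j, w j ≤ a j - h - r ∨ b j + h + r ≤ w j

variable {ι : Type*} {a b w : ι → ℝ}

lemma IsFarFromBoundary.add {h r q : ℝ} (hw : IsFarFromBoundary a b h r w) {y : ι → ℝ}
    (hy : ∀ j, |y j| ≤ q) : IsFarFromBoundary a b h (r - q) (w + y) := by
  simp only [abs_le] at hy
  simp only [IsFarFromBoundary, Set.mem_Icc, Pi.add_apply] at hw ⊢
  refine hw.imp (fun hin j ↦ ⟨?_, ?_⟩) fun ⟨j, hj⟩ ↦ ⟨j, hj.imp (fun hj ↦ ?_) fun hj ↦ ?_⟩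
  · linarith [(hin j).1, (hy j).1]
  · linarith [(hin j).2, (hy j).2]
  · linarith [(hy j).2]
  · linarith [(hy j).1]

lemma IsFarFromBoundary.of_not_and_not {h r : ℝ}
    (hw : ¬((∀ j, a j - (r + h) < w j ∧ w j ≤ b j + (r + h)) ∧
      ¬∀ j, a j + r < w j ∧ w j ≤ b j - r)) : IsFarFromBoundary a b h r w := by
  by_cases hin : ∀ j, a j + r < w j ∧ w j ≤ b j - r
  · exact .inl fun j ↦ ⟨(hin j).1.le, (hin j).2⟩
  · have hout : ¬∀ j, a j - (r + h) < w j ∧ w j ≤ b j + (r + h) := fun hbox ↦ hw ⟨hbox, hin⟩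
    obtain ⟨j, hj⟩ := not_forall.1 hout
    refine .inr ⟨j, (not_and_or.1 hj).imp (fun hj ↦ ?_) fun hj ↦ ?_⟩ <;> linarith

variable [Fintype ι] {φ : ℝ} {α : ι → ℕ}

lemma exists_abs_layerDeriv_le (hφ : 0 < φ) (hε : 0 < ε) (hσ : 0 < σ) (hσ1 : σ ≤ 1) (hδ : 0 ≤ δ)
    (hw : IsFarFromBoundary a b (1 / φ) (2 * ε * δ) w) (hα : α ≠ 0) :
    ∃ k, ∀ p, |layerDeriv a b φ ε (ε * σ) p α w| ≤
      (gaussianDerivConst (∑ j, α j) / (ε * σ)) ^ (∑ j, α j) *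
        (2 * Real.exp (-(3 / 4) * δ ^ 2) * Real.cosh (δ / 2 * p.1 k)) := by
  have hs := mul_pos hε hσ
  have hle (k : ι) : α k ≤ ∑ j, α j := Finset.single_le_sum (by simp) (Finset.mem_univ k)
  have hlevel (t : unitInterval) : 0 ≤ t / φ ∧ t / φ ≤ 1 / φ :=
    ⟨div_nonneg t.2.1 hφ.le, div_le_div_of_nonneg_right t.2.2 hφ.le⟩
  rcases hw with hin | ⟨k, hk⟩
  · obtain ⟨k, hk⟩ := Function.ne_iff.1 hα
    refine ⟨k, fun ⟨y, t⟩ ↦ abs_boxProbDeriv_le_mul hs k ?_⟩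
    obtain ⟨ht, -⟩ := hlevel t
    exact abs_iteratedDeriv_intervalProb_le_of_mem hε hσ hσ1 hδ hk (hle k)
      ⟨by linarith [(hin k).1], by linarith [(hin k).2]⟩
  · refine ⟨k, fun ⟨y, t⟩ ↦ abs_boxProbDeriv_le_mul hs k ?_⟩
    obtain ⟨-, ht⟩ := hlevel t
    exact abs_iteratedDeriv_intervalProb_le_of_le_or_le hε hσ hσ1 hδ (hle k)
      (hk.imp (fun hk ↦ by linarith) fun hk ↦ by linarith)

variable [DecidableEq ι] {T : Matrix ι ι ℝ}

lemma abs_integral_layerDeriv_centeredGaussian_le (hφ : 0 < φ) (hε : 0 < ε) (hσ : 0 < σ)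
    (hσ1 : σ ≤ 1) (hδ : 0 ≤ δ) (hT : T.PosSemidef) (hT1 : ∀ j, T j j ≤ 1)
    (hw : IsFarFromBoundary a b (1 / φ) (2 * ε * δ) w) (hα : α ≠ 0) :
    |∫ p, layerDeriv a b φ ε (ε * σ) p α w ∂(centeredGaussian T).prod volume| ≤
      (gaussianDerivConst (∑ j, α j) / (ε * σ)) ^ (∑ j, α j) *
        (2 * Real.exp (-(5 / 8) * δ ^ 2)) := by
  obtain ⟨k, hk⟩ := exists_abs_layerDeriv_le hφ hε hσ hσ1 hδ hw hα
  set K := (gaussianDerivConst (∑ j, α j) / (ε * σ)) ^ ∑ j, α j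
  have hK : 0 ≤ K := by have := gaussianDerivConst_pos (∑ j, α j); positivity
  have hinteg : Integrable (fun p : (ι → ℝ) × unitInterval ↦ K * (2 * Real.exp (-(3 / 4) * δ ^ 2) *
      Real.cosh (δ / 2 * p.1 k))) ((centeredGaussian T).prod volume) :=
    (((integrable_cosh_mul_eval_centeredGaussian hT k _).comp_fst volume).const_mul _).const_mul _
  have hcosh : ∫ p : (ι → ℝ) × unitInterval, Real.cosh (δ / 2 * p.1 k)
      ∂(centeredGaussian T).prod volume = Real.exp (T k k * (δ / 2) ^ 2 / 2) := by
    rw [integral_fun_fst (fun y : ι → ℝ ↦ Real.cosh (δ / 2 * y k)), probReal_univ, one_smul,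
      integral_cosh_mul_eval_centeredGaussian hT]
  refine (norm_integral_le_of_norm_le (f := fun p ↦ layerDeriv a b φ ε (ε * σ) p α w) hinteg
    (ae_of_all _ hk)).trans ?_
  rw [integral_const_mul, integral_const_mul, hcosh, mul_assoc 2, ← Real.exp_add]
  have hvar : T k k * (δ / 2) ^ 2 ≤ (δ / 2) ^ 2 := mul_le_of_le_one_left (sq_nonneg _) (hT1 k)
  gcongr
  linarith

variable {d : ℕ} {a b w : Fin d → ℝ} {S : Matrix (Fin d) (Fin d) ℝ}

lemma abs_iteratedFDeriv_rhoFn_centeredGaussian_le (hφ : 0 < φ) (hε : 0 < ε) (hσ : 0 < σ)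
    (hδ : 0 ≤ δ) (hS : (S - σ ^ 2 • 1).PosSemidef) (hS1 : ∀ j, S j j ≤ 1)
    (hw : IsFarFromBoundary a b (1 / φ) (2 * ε * δ) w) (hv : v ≠ 0) (J : Fin v → Fin d) :
    |iteratedFDeriv ℝ v (rhoFn d a b φ ε (centeredGaussian S)) w (fun i ↦ Pi.single (J i) 1)| ≤
      (gaussianDerivConst v / (ε * σ)) ^ v * (2 * Real.exp (-(5 / 8) * δ ^ 2)) := by
  let α : Fin d → ℕ := ∑ i, Pi.single (J i) 1
  have hsum : ∑ j, α j = v := by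
    simp only [α, Finset.sum_apply]
    rw [Finset.sum_comm]
    simp
  have hα : α ≠ 0 := fun h ↦ hv (by rw [← hsum, h]; simp)
  have hσ1 : σ ≤ 1 := le_one_of_posSemidef_sub_sq_smul_one hS (hS1 (J ⟨0, hv.pos⟩))
  have hT1 (j : Fin d) : (S - σ ^ 2 • 1) j j ≤ 1 := by
    simpa using (sub_le_self _ (sq_nonneg σ)).trans (hS1 j)
  have h := abs_integral_layerDeriv_centeredGaussian_le hφ hε hσ hσ1 hδ hS hT1 hw hα
  rw [hsum] at h
  rwa [centeredGaussian_eq_conv_map_smul_pi hS,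
    iteratedFDeriv_rhoFn_conv_apply_single a b _ hφ (mul_pos hε hσ)]

lemma iSup_abs_iteratedFDeriv_rhoFn_centeredGaussian_le {κ η : ℝ} (hφ : 0 < φ) (hε : 0 < ε)
    (hσ : 0 < σ) (hη : 0 ≤ η) (hηκ : η ≤ κ) (hS : (S - σ ^ 2 • 1).PosSemidef)
    (hS1 : ∀ j, S j j ≤ 1) (hw : IsFarFromBoundary a b (1 / φ) (2 * ε * κ) w) (hv : v ≠ 0)
    (J : Fin v → Fin d) :
    ⨆ y : {y : Fin d → ℝ // ‖y‖ ≤ ε * σ * η},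
        |iteratedFDeriv ℝ v (rhoFn d a b φ ε (centeredGaussian S)) (w + y.1)
          (fun i ↦ Pi.single (J i) 1)| ≤
      (gaussianDerivConst v / (ε * σ)) ^ v * (2 * Real.exp (-(κ - η) ^ 2 / 4)) := by
  have hK := gaussianDerivConst_pos v
  have hσ1 : σ ≤ 1 := le_one_of_posSemidef_sub_sq_smul_one hS (hS1 (J ⟨0, hv.pos⟩))
  refine Real.iSup_le (fun ⟨y, hy⟩ ↦ ?_) (by positivity)
  have hcoord (j : Fin d) : |y j| ≤ 2 * ε * η :=
    calc |y j| ≤ ‖y‖ := norm_le_pi_norm y j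
      _ ≤ ε * σ * η := hy
      _ ≤ ε * 2 * η := by gcongr; exact hσ1.trans one_le_two
      _ = 2 * ε * η := by ring
  have hfar : IsFarFromBoundary a b (1 / φ) (2 * ε * (κ - η)) (w + y) := by
    rw [mul_sub]
    exact hw.add hcoord
  refine (abs_iteratedFDeriv_rhoFn_centeredGaussian_le hφ hε hσ (sub_nonneg.2 hηκ) hS hS1 hfar hv
    J).trans ?_
  gcongr
  linarith [sq_nonneg (κ - η)]

end Decay

theorem stmt16_general (v : ℕ) (hv : 1 ≤ v) :
    ∃ C : ℝ, ∀ d : ℕ,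
      ∀ (S : Fin d → Fin d → ℝ), (∀ j, S j j ≤ 1) →
      ∀ σs : ℝ, 0 < σs →
      IsGLB {r : ℝ | ∃ x : Fin d → ℝ, (∑ j, (x j) ^ 2) = 1 ∧
        r = ∑ j, ∑ k, x j * S j k * x k} (σs ^ 2) →
      ∀ γ : Measure (Fin d → ℝ), IsProbabilityMeasure γ →
      (∀ l : (Fin d → ℝ) →ₗ[ℝ] ℝ, ∃ vr : NNReal, γ.map l = gaussianReal 0 vr) →
      (∀ j k, ∫ z, z j * z k ∂γ = S j k) →
      ∀ φ : ℝ, 0 < φ → ∀ ε : ℝ, 0 < ε →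
      ∀ a b : Fin d → ℝ, ∀ κ η : ℝ, 0 ≤ η → η ≤ κ →
      ∀ w : Fin d → ℝ,
        ¬((∀ j, a j - (2 * ε * κ + 1 / φ) < w j ∧ w j ≤ b j + (2 * ε * κ + 1 / φ)) ∧
          ¬(∀ j, a j + 2 * ε * κ < w j ∧ w j ≤ b j - 2 * ε * κ)) →
        ∑ J : Fin v → Fin d,
          (⨆ y : {y : Fin d → ℝ // ‖y‖ ≤ ε * σs * η},
            |iteratedFDeriv ℝ v (rhoFn d a b φ ε γ) (w + y.1)
              (fun i => Pi.single (J i) 1)|)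
          ≤ C * (d : ℝ) ^ v / (ε * σs) ^ v * Real.exp (-(κ - η) ^ 2 / 4) := by
  refine ⟨2 * gaussianDerivConst v ^ v, fun d S hS1 σs hσ hglb γ _ hlin hcov φ hφ ε hε a b κ η
    hη hηκ w hw ↦ ?_⟩
  have hsymm : (Matrix.of S).IsHermitian := .ext fun j k ↦ by simp [← hcov, mul_comm]
  have hS : (Matrix.of S - σs ^ 2 • 1).PosSemidef :=
    posSemidef_sub_smul_one hsymm fun x hx ↦ hglb.1 ⟨x, hx, rfl⟩
  have hSpos : (Matrix.of S).PosSemidef := by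
    simpa using hS.add (Matrix.PosSemidef.one.smul (sq_nonneg σs))
  obtain rfl : γ = centeredGaussian (Matrix.of S) := eq_centeredGaussian hSpos hlin hcov
  calc _ ≤ ∑ J : Fin v → Fin d,
        (gaussianDerivConst v / (ε * σs)) ^ v * (2 * Real.exp (-(κ - η) ^ 2 / 4)) :=
        Finset.sum_le_sum fun J _ ↦ iSup_abs_iteratedFDeriv_rhoFn_centeredGaussian_le hφ hε hσ hη
          hηκ hS hS1 (.of_not_and_not hw) (Nat.one_le_iff_ne_zero.1 hv) J
    _ = _ := by
        rw [Finset.sum_const, Finset.card_univ, Fintype.card_fun, Fintype.card_fin,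
          Fintype.card_fin, nsmul_eq_mul, Nat.cast_pow, div_pow]
        ring

/-- decay of the derivatives of ρ away from the boundary of A.
For every v ≥ 1 there is C = C(v) such that for all w outside A^{2εκ+1/φ} \ A^{−2εκ},
Σ_{j_1…j_v} sup_{‖y‖_∞ ≤ εσ_*η} |∂_{j_1…j_v} ρ^{A,φ,ε,Σ}(w+y)|
  ≤ C d^v (εσ_*)^{−v} e^{−(κ−η)²/4}, whenever κ > η > 0. -/
theorem stmt16 (v : ℕ) (hv : 1 ≤ v) :
    ∃ C : ℝ, ∀ d : ℕ,
      ∀ (S : Fin d → Fin d → ℝ), (∀ j, S j j = 1) →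
      ∀ σs : ℝ, 0 < σs →
      IsGLB {r : ℝ | ∃ x : Fin d → ℝ, (∑ j, (x j) ^ 2) = 1 ∧
        r = ∑ j, ∑ k, x j * S j k * x k} (σs ^ 2) →
      ∀ γ : Measure (Fin d → ℝ), IsProbabilityMeasure γ →
      (∀ l : (Fin d → ℝ) →ₗ[ℝ] ℝ, ∃ vr : NNReal, γ.map l = gaussianReal 0 vr) →
      (∀ j k, ∫ z, z j * z k ∂γ = S j k) →
      ∀ φ : ℝ, 0 < φ → ∀ ε : ℝ, 0 < ε → ε ≤ 1 →
      ∀ a b : Fin d → ℝ, ∀ κ η : ℝ, 0 < η → η < κ →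
      ∀ w : Fin d → ℝ,
        ¬((∀ j, a j - (2 * ε * κ + 1 / φ) < w j ∧ w j ≤ b j + (2 * ε * κ + 1 / φ)) ∧
          ¬(∀ j, a j + 2 * ε * κ < w j ∧ w j ≤ b j - 2 * ε * κ)) →
        ∑ J : Fin v → Fin d,
          (⨆ y : {y : Fin d → ℝ // ‖y‖ ≤ ε * σs * η},
            |iteratedFDeriv ℝ v (rhoFn d a b φ ε γ) (w + y.1)
              (fun i => Pi.single (J i) 1)|)
          ≤ C * (d : ℝ) ^ v / (ε * σs) ^ v * Real.exp (-(κ - η) ^ 2 / 4) :=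
  (stmt16_general v hv).imp fun _ h d S hS σs hσ hglb γ hγ hlin hcov φ hφ ε hε _ a b κ η hη hηκ ↦
    h d S (fun j ↦ (hS j).le) σs hσ hglb γ hγ hlin hcov φ hφ ε hε a b κ η hη.le hηκ.le
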